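/- arXiv:1401.7108 — 3 statements merged into one kernel-verified Lean document; each statement's English description precedes it below -/
import Mathlib

section
/- In the Setup below, fix an integer N ≥ 0 and constants C_j > 0 with ‖A_{j,k}‖ ≤ C_j and ‖B_{j,k}‖ ≤ C_j for all k, and let C ≥ Σ_{j=1}^{N} C_j. Define R_k := χ_k⁻¹·Σ_{j=0}^{N} k^{−j} A_{j,k}. Then: (1) R_k ∈ B_k(C) for every k; (2) there exist D > 0 and k₀ such that for all k ≥ k₀, R_k is invertible and ‖χ_k⁻¹ R_k⁻¹ − Σ_{j=0}^{N} k^{−j} B_{j,k}‖ ≤ D·k^{−N−1}. -/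
/-!
The recursion for `B` says exactly that `f = ∑ B j X ^ j` is the inverse of `g = ∑ A j X ^ j` as a
formal power series. Multiplying the truncations of `f` and `g` at order `N` therefore gives `1` up
to terms of total degree greater than `N`, so at `x = k⁻¹` the truncation of `f` inverts the
truncation `S` of `g` up to an error of order `k ^ (-N - 1)`. Since `S = 1 + O(k⁻¹)`, the Neumann
series bounds `S⁻¹` for large `k`, and this approximate inverse is close to `S⁻¹ = (χ k)⁻¹ R⁻¹`.
-/

open Finset PowerSeries
open scoped Ring

theorem smul_inverse_smul₀ {G M : Type*} [GroupWithZero G] [MonoidWithZero M] [MulAction G M]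
    [SMulCommClass G M M] [IsScalarTower G M M] {c : G} (hc : c ≠ 0) {a : M} (ha : IsUnit a) :
    c • (c • a)⁻¹ʳ = a⁻¹ʳ := by
  obtain ⟨u, rfl⟩ := ha
  have hinv : (c • (u : M))⁻¹ʳ = c⁻¹ • ((u⁻¹ : Mˣ) : M) :=
    Ring.inverse_unit (Units.mk0 c hc • u)
  rw [hinv, smul_inv_smul₀ hc, Ring.inverse_unit]

section NeumannSeries

variable {R : Type*} [NormedRing R] [HasSummableGeomSeries R] {s : R}

theorem isUnit_of_norm_one_sub_lt_one (hs : ‖1 - s‖ < 1) : IsUnit s := by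
  simpa only [sub_sub_cancel] using isUnit_one_sub_of_norm_lt_one hs

theorem norm_inverse_le_of_norm_one_sub_lt_one (hs : ‖1 - s‖ < 1) :
    ‖s⁻¹ʳ‖ ≤ ‖(1 : R)‖ - 1 + (1 - ‖1 - s‖)⁻¹ := by
  have hsum := geom_series_eq_inverse (1 - s) hs
  rw [sub_sub_cancel] at hsum
  exact hsum ▸ tsum_geometric_le_of_norm_lt_one (1 - s) hs

end NeumannSeries

theorem norm_inverse_sub_le {R : Type*} [SeminormedRing R] {s : R} (hs : IsUnit s) (t : R) :
    ‖s⁻¹ʳ - t‖ ≤ ‖t * s - 1‖ * ‖s⁻¹ʳ‖ := by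
  have hfactor : t - s⁻¹ʳ = (t * s - 1) * s⁻¹ʳ := by
    rw [sub_mul, Ring.mul_inverse_cancel_right s t hs, one_mul]
  rw [norm_sub_rev, hfactor]
  exact norm_mul_le _ _

theorem mk_mul_mk_eq_one {R : Type*} [Ring R] {a b : ℕ → R} (ha : a 0 = 1) (hb : b 0 = 1)
    (hrec : ∀ j, b (j + 1) = -∑ i ∈ range (j + 1), b i * a (j + 1 - i)) :
    PowerSeries.mk b * PowerSeries.mk a = 1 := by
  ext m
  simp only [coeff_mul, coeff_mk, coeff_one,
    Nat.sum_antidiagonal_eq_sum_range_succ fun i j => b i * a j]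
  cases m with
  | zero => simp [ha, hb]
  | succ j => simp [sum_range_succ _ (j + 1), ha, hrec j]

section TruncEval

variable {𝕜 R : Type*}

/-- The value at the scalar `x` of the truncation of the power series `f` to degree at most `N`
(whereas `PowerSeries.trunc N` keeps the degrees less than `N`). -/
noncomputable def truncEval [CommSemiring 𝕜] [Semiring R] [Algebra 𝕜 R] (f : R⟦X⟧) (N : ℕ)
    (x : 𝕜) : R :=
  ∑ j ∈ range (N + 1), x ^ j • coeff j f

section Semiring

variable [CommSemiring 𝕜] [Semiring R] [Algebra 𝕜 R]

theorem truncEval_one (N : ℕ) (x : 𝕜) : truncEval (1 : R⟦X⟧) N x = 1 := by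
  simp [truncEval, coeff_one]

theorem truncEval_mul (f g : R⟦X⟧) (N : ℕ) (x : 𝕜) :
    truncEval (f * g) N x = ∑ i ∈ range (N + 1), ∑ j ∈ range (N + 1 - i),
      x ^ (i + j) • (coeff i f * coeff j g) := by
  rw [← sum_range_diag_flip (N + 1) fun i j => x ^ (i + j) • (coeff i f * coeff j g)]
  refine sum_congr rfl fun m _ => ?_
  rw [coeff_mul, Nat.sum_antidiagonal_eq_sum_range_succ fun i j => coeff i f * coeff j g, smul_sum]
  refine sum_congr rfl fun i hi => ?_
  rw [Nat.add_sub_cancel' (mem_range_succ_iff.mp hi)]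

end Semiring

section Ring

variable [CommSemiring 𝕜] [Ring R] [Algebra 𝕜 R]

theorem truncEval_sub_coeff_zero (f : R⟦X⟧) (N : ℕ) (x : 𝕜) :
    truncEval f N x - coeff 0 f = ∑ j ∈ Icc 1 N, x ^ j • coeff j f := by
  rw [truncEval, sum_range_eq_add_Ico _ N.succ_pos, pow_zero, one_smul, add_sub_cancel_left,
    Nat.succ_eq_add_one, Ico_add_one_right_eq_Icc]

theorem truncEval_mul_truncEval_sub (f g : R⟦X⟧) (N : ℕ) (x : 𝕜) :
    truncEval f N x * truncEval g N x - truncEval (f * g) N x =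
      ∑ i ∈ range (N + 1), ∑ j ∈ Ico (N + 1 - i) (N + 1),
        x ^ (i + j) • (coeff i f * coeff j g) := by
  rw [truncEval_mul, truncEval, truncEval, sum_mul_sum, ← sum_sub_distrib]
  refine sum_congr rfl fun i _ => ?_
  simp only [smul_mul_smul_comm, ← pow_add]
  rw [← sum_range_add_sum_Ico _ (Nat.sub_le (N + 1) i), add_sub_cancel_left]

end Ring

variable [NormedField 𝕜] [NormedRing R] [NormedAlgebra 𝕜 R]

theorem norm_truncEval_sub_coeff_zero_le {f : R⟦X⟧} {c : ℕ → ℝ} (hfc : ∀ j, ‖coeff j f‖ ≤ c j)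
    (N : ℕ) {x : 𝕜} (hx : ‖x‖ ≤ 1) :
    ‖truncEval f N x - coeff 0 f‖ ≤ (∑ j ∈ Icc 1 N, c j) * ‖x‖ := by
  rw [truncEval_sub_coeff_zero, sum_mul]
  refine norm_sum_le_of_le _ fun j hj => ?_
  have hpow : ‖x‖ ^ j ≤ ‖x‖ :=
    pow_le_of_le_one (norm_nonneg x) hx (Nat.one_le_iff_ne_zero.mp (mem_Icc.mp hj).1)
  rw [norm_smul, norm_pow, mul_comm]
  exact mul_le_mul (hfc j) hpow (by positivity) ((norm_nonneg _).trans (hfc j))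

theorem norm_truncEval_mul_truncEval_sub_le (f g : R⟦X⟧) (N : ℕ) {x : 𝕜} (hx : ‖x‖ ≤ 1) :
    ‖truncEval f N x * truncEval g N x - truncEval (f * g) N x‖ ≤
      (∑ i ∈ range (N + 1), ‖coeff i f‖) * (∑ j ∈ range (N + 1), ‖coeff j g‖) *
        ‖x‖ ^ (N + 1) := by
  have hterm (i j : ℕ) (hj : j ∈ Ico (N + 1 - i) (N + 1)) :
      ‖x ^ (i + j) • (coeff i f * coeff j g)‖ ≤
        ‖coeff i f‖ * ‖coeff j g‖ * ‖x‖ ^ (N + 1) := by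
    have hdeg : N + 1 ≤ i + j := tsub_le_iff_left.mp (mem_Ico.mp hj).1
    rw [norm_smul, norm_pow, mul_comm]
    gcongr ?_ * ?_
    · exact norm_mul_le _ _
    · exact pow_le_pow_of_le_one (norm_nonneg x) hx hdeg
  rw [truncEval_mul_truncEval_sub, sum_mul_sum, sum_mul]
  refine norm_sum_le_of_le _ fun i _ => ?_
  rw [sum_mul]
  refine (norm_sum_le_of_le _ (hterm i)).trans
    (sum_le_sum_of_subset_of_nonneg ?_ fun _ _ _ => by positivity)
  rw [range_eq_Ico]
  exact Ico_subset_Ico_left (Nat.zero_le _)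

theorem norm_inverse_truncEval_sub_le [HasSummableGeomSeries R] {f g : R⟦X⟧} (hfg : f * g = 1)
    {N : ℕ} {x : 𝕜} (hx : ‖x‖ ≤ 1) (hg : ‖1 - truncEval g N x‖ ≤ 1 / 2) :
    ‖(truncEval g N x)⁻¹ʳ - truncEval f N x‖ ≤
      (∑ i ∈ range (N + 1), ‖coeff i f‖) * (∑ j ∈ range (N + 1), ‖coeff j g‖) *
        ‖x‖ ^ (N + 1) * (‖(1 : R)‖ + 1) := by
  have hlt : ‖1 - truncEval g N x‖ < 1 := hg.trans_lt one_half_lt_one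
  have hinv : ‖(truncEval g N x)⁻¹ʳ‖ ≤ ‖(1 : R)‖ + 1 := by
    have hneumann := norm_inverse_le_of_norm_one_sub_lt_one hlt
    have htwo : (1 - ‖1 - truncEval g N x‖)⁻¹ ≤ 2 := inv_le_of_inv_le₀ two_pos (by linarith)
    linarith
  have hprod := norm_truncEval_mul_truncEval_sub_le f g N hx
  rw [hfg, truncEval_one] at hprod
  refine (norm_inverse_sub_le (isUnit_of_norm_one_sub_lt_one hlt) _).trans ?_
  gcongr

theorem norm_inverse_truncEval_sub_le_of_norm_coeff_le [HasSummableGeomSeries R] {f g : R⟦X⟧}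
    (hfg : f * g = 1) (hg0 : coeff 0 g = 1) {c : ℕ → ℝ} (hfc : ∀ j, ‖coeff j f‖ ≤ c j)
    (hgc : ∀ j, ‖coeff j g‖ ≤ c j) {N : ℕ} {x : 𝕜} (hx : ‖x‖ ≤ 1)
    (hg : ‖1 - truncEval g N x‖ ≤ 1 / 2) :
    ‖(truncEval g N x)⁻¹ʳ - truncEval f N x‖ ≤
      (∑ j ∈ range (N + 1), c j) ^ 2 * (c 0 + 1) * ‖x‖ ^ (N + 1) := by
  have hone : ‖(1 : R)‖ ≤ c 0 := hg0 ▸ hgc 0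
  have hc : 0 ≤ ∑ j ∈ range (N + 1), c j :=
    sum_nonneg fun j _ => (norm_nonneg _).trans (hfc j)
  refine (norm_inverse_truncEval_sub_le hfg hx hg).trans ?_
  rw [sq, mul_right_comm _ (c 0 + 1)]
  gcongr with i _ j _
  · exact hfc i
  · exact hgc j

end TruncEval

theorem stmt3_general (𝓐 : ℕ → Type*) [∀ k, NormedRing (𝓐 k)] [∀ k, NormedAlgebra ℝ (𝓐 k)]
    [∀ k, HasSummableGeomSeries (𝓐 k)] (χ : ℕ → ℝ) (hχ : ∀ k : ℕ, 0 < k → χ k ≠ 0)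
    (A B : ∀ k : ℕ, ℕ → 𝓐 k) (hA0 : ∀ k, A k 0 = 1) (hB0 : ∀ k, B k 0 = 1)
    (hBrec : ∀ k j, B k (j + 1) = -∑ i ∈ range (j + 1), B k i * A k (j + 1 - i))
    (N : ℕ) (Cs : ℕ → ℝ) (hCsA : ∀ (k : ℕ) (j : ℕ), 0 < k → ‖A k j‖ ≤ Cs j ∧ ‖B k j‖ ≤ Cs j)
    (C : ℝ) (hC : C ≥ ∑ j ∈ Icc 1 N, Cs j)
    (R : ∀ k : ℕ, 𝓐 k)
    (hR : ∀ k, R k = (χ k)⁻¹ • ∑ j ∈ range (N + 1), ((k : ℝ) ^ j)⁻¹ • A k j) :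
    (∀ k : ℕ, 0 < k → ‖χ k • R k - 1‖ ≤ C * (k : ℝ)⁻¹) ∧
    ∃ D : ℝ, 0 < D ∧ ∃ k₀ : ℕ, ∀ k ≥ k₀, IsUnit (R k) ∧
      ‖(χ k)⁻¹ • (R k)⁻¹ʳ -
        ∑ j ∈ range (N + 1), ((k : ℝ) ^ j)⁻¹ • B k j‖ ≤ D * ((k : ℝ) ^ (N + 1))⁻¹ := by
  let S (k : ℕ) : 𝓐 k := truncEval (PowerSeries.mk (A k)) N (k : ℝ)⁻¹
  have hAcoeff (k : ℕ) (hk : 0 < k) (j : ℕ) : ‖coeff j (PowerSeries.mk (A k))‖ ≤ Cs j := by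
    simpa only [coeff_mk] using (hCsA k j hk).1
  have hBcoeff (k : ℕ) (hk : 0 < k) (j : ℕ) : ‖coeff j (PowerSeries.mk (B k))‖ ≤ Cs j := by
    simpa only [coeff_mk] using (hCsA k j hk).2
  have hRS (k : ℕ) : R k = (χ k)⁻¹ • S k := by simp [S, truncEval, hR]
  have hx (k : ℕ) (hk : 0 < k) : ‖(k : ℝ)⁻¹‖ ≤ 1 := by
    simpa using inv_le_one_of_one_le₀ (Nat.one_le_cast.mpr hk)
  have hS (k : ℕ) (hk : 0 < k) : ‖S k - 1‖ ≤ C * (k : ℝ)⁻¹ := by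
    have htail := norm_truncEval_sub_coeff_zero_le (hAcoeff k hk) N (hx k hk)
    rw [coeff_mk, hA0, norm_inv, Real.norm_natCast] at htail
    exact htail.trans (by gcongr)
  refine ⟨fun k hk => by simpa only [hRS, smul_inv_smul₀ (hχ k hk)] using hS k hk,
    max 1 ((∑ j ∈ range (N + 1), Cs j) ^ 2 * (Cs 0 + 1)), by positivity,
    max 1 ⌈2 * C⌉₊, fun k hk => ?_⟩
  obtain ⟨hk0, hkC⟩ : 0 < k ∧ 2 * C ≤ k := by
    simpa [Nat.one_le_iff_ne_zero, pos_iff_ne_zero] using hk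
  have hhalf : ‖1 - S k‖ ≤ 1 / 2 := by
    rw [norm_sub_rev]
    refine (hS k hk0).trans ?_
    rw [← div_eq_mul_inv, div_le_iff₀ (Nat.cast_pos.mpr hk0)]
    linarith
  have hunit : IsUnit (S k) := isUnit_of_norm_one_sub_lt_one (hhalf.trans_lt one_half_lt_one)
  have hχinv : (χ k)⁻¹ ≠ 0 := inv_ne_zero (hχ k hk0)
  rw [hRS, smul_inverse_smul₀ hχinv hunit]
  refine ⟨hunit.smul (Units.mk0 _ hχinv), ?_⟩
  have hbound := norm_inverse_truncEval_sub_le_of_norm_coeff_le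
    (mk_mul_mk_eq_one (hA0 k) (hB0 k) (hBrec k)) (by rw [coeff_mk, hA0]) (hBcoeff k hk0)
    (hAcoeff k hk0) (hx k hk0) hhalf
  refine le_mul_of_le_mul_of_nonneg_right ?_ (le_max_right _ _) (by positivity)
  simpa only [S, truncEval, coeff_mk, norm_inv, Real.norm_natCast, inv_pow] using hbound

/-- In the Setup (see hypotheses), fix `N ≥ 0` and constants `Cs j > 0` bounding
`‖A k j‖, ‖B k j‖`, and let `C ≥ Σ_{j=1}^{N} Cs j`.  With
`R k := (χ k)⁻¹ • Σ_{j=0}^{N} k^{−j} • A k j` we have: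
(1) `R k ∈ B_k(C)`, i.e. `‖χ k • R k − Id‖ ≤ C·k⁻¹`, for every `k ≥ 1`;
(2) there are `D > 0` and `k₀` such that for all `k ≥ k₀`, `R k` is invertible and
`‖(χ k)⁻¹ • (R k)⁻¹ − Σ_{j=0}^{N} k^{−j} • B k j‖ ≤ D·k^{−N−1}`. -/
theorem stmt3 (V : ℕ → Type*) [∀ k, NormedAddCommGroup (V k)]
    [∀ k, InnerProductSpace ℂ (V k)] [∀ k, FiniteDimensional ℂ (V k)]
    (α : ∀ k, V k →L[ℂ] V k) (M : ℝ) (hM : 0 < M) (hα : ∀ k, ‖α k‖ ≤ M)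
    (n : ℕ) (hn : 1 ≤ n) (c₁ c₂ E : ℝ) (hc₁ : 0 < c₁) (hc₂ : 0 < c₂) (hE : 0 < E)
    (χ : ℕ → ℝ) (hχ : ∀ k : ℕ, 0 < k → c₁ * (k : ℝ) ^ n ≤ χ k ∧ χ k ≤ c₂ * (k : ℝ) ^ n)
    (ε : ℕ → ℝ) (hε : ∀ k, 0 < ε k ∧ ε k ≤ E)
    (A B : ∀ k : ℕ, ℕ → (V k →L[ℂ] V k))
    (hA0 : ∀ k, A k 0 = 1) (hB0 : ∀ k, B k 0 = 1)
    (hArec : ∀ k j, A k (j + 1) = ε k • ∑ i ∈ Finset.range (j + 1),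
      (α k * (A k i * ContinuousLinearMap.adjoint (α k) * B k (j - i)) -
        (A k i * ContinuousLinearMap.adjoint (α k) * B k (j - i)) * α k))
    (hBrec : ∀ k j, B k (j + 1) = -∑ i ∈ Finset.range (j + 1), B k i * A k (j + 1 - i))
    (N : ℕ) (Cs : ℕ → ℝ) (hCs : ∀ j, 0 < Cs j)
    (hCsA : ∀ (k : ℕ) (j : ℕ), 0 < k → ‖A k j‖ ≤ Cs j ∧ ‖B k j‖ ≤ Cs j)
    (C : ℝ) (hC : C ≥ ∑ j ∈ Finset.Icc 1 N, Cs j)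
    (R : ∀ k : ℕ, V k →L[ℂ] V k)
    (hR : ∀ k, R k = (χ k)⁻¹ • ∑ j ∈ Finset.range (N + 1), ((k : ℝ) ^ j)⁻¹ • A k j) :
    (∀ k : ℕ, 0 < k → ‖χ k • R k - 1‖ ≤ C * (k : ℝ)⁻¹) ∧
    ∃ D : ℝ, 0 < D ∧ ∃ k₀ : ℕ, ∀ k ≥ k₀, IsUnit (R k) ∧
      ‖(χ k)⁻¹ • Ring.inverse (R k) -
        ∑ j ∈ Finset.range (N + 1), ((k : ℝ) ^ j)⁻¹ • B k j‖ ≤ D * ((k : ℝ) ^ (N + 1))⁻¹ :=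
  stmt3_general (fun k => V k →L[ℂ] V k) χ
    (fun k hk => ((mul_pos hc₁ (pow_pos (Nat.cast_pos.mpr hk) n)).trans_le (hχ k hk).1).ne')
    A B hA0 hB0 hBrec N Cs hCsA C hC R hR
end

section
/- In the Setup below, fix an integer N ≥ 0 and define R_k := χ_k⁻¹·Σ_{j=0}^{N} k^{−j} A_{j,k}. Then there exist D > 0 and k₀ such that for all k ≥ k₀ the operator R_k is invertible and ‖χ_k R_k − Id − ε_k k⁻¹·[α_k, R_k β_k R_k⁻¹]‖ ≤ D·k^{−N−1}. -/
/-!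
Write `t = 1/k`. The recursions say that the formal series `S = Σ tʲ Aⱼ` and `T = Σ tʲ Bⱼ` satisfy
`T S = 1` and `S = 1 + ε t [α, S β T]`. The weighted norms `rʲ‖Aⱼ‖`, `rʲ‖Bⱼ‖` obey convolution
inequalities, and these keep their partial sums bounded as soon as `12 |ε| ‖α‖ ‖β‖ r ≤ 1`. Hence for
`t ≤ r` both series converge, and `S` is an exact solution of `S = 1 + ε t [α, S β S⁻¹]` with
`‖1 - S‖ ≤ 1/2`. The partial sums of `S` lie in the same ball, differ from `S` by
`O((t/r)^(N+1))`, and the equation is Lipschitz in `S` there. Since `r` depends only on a bound for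
`|ε| ‖α‖ ‖β‖`, the estimate is uniform in `k`; the scalar `χ` cancels in `R β R⁻¹ = S β S⁻¹`.
-/

open Finset Filter
open scoped Ring

section Convolution

lemma sum_range_sum_mul_le_mul_sum {R : Type*} [Semiring R] [PartialOrder R] [IsOrderedRing R]
    {x y : ℕ → R} (hx : ∀ i, 0 ≤ x i) (hy : ∀ i, 0 ≤ y i) (n : ℕ) :
    ∑ m ∈ range n, ∑ i ∈ range (m + 1), x i * y (m - i) ≤
      (∑ i ∈ range n, x i) * ∑ j ∈ range n, y j := by
  rw [sum_range_diag_flip n fun i j => x i * y j, sum_mul]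
  gcongr with i
  rw [← mul_sum]
  gcongr
  · exact hx i
  · exact fun j _ _ => hy j
  · exact Nat.sub_le n i

lemma sum_range_succ_le_of_convolution_le {x y : ℕ → ℝ} (hx : ∀ i, 0 ≤ x i) (hy : ∀ i, 0 ≤ y i)
    (hx0 : x 0 ≤ 1) (hy0 : y 0 ≤ 1)
    (hxy : ∀ j, 6 * x (j + 1) ≤ ∑ i ∈ range (j + 1), x i * y (j - i))
    (hyx : ∀ j, y (j + 1) ≤ ∑ i ∈ range (j + 1), y i * x (j + 1 - i)) (n : ℕ) :
    ∑ j ∈ range n, x (j + 1) ≤ 1 / 2 ∧ ∑ j ∈ range n, y (j + 1) ≤ 1 := by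
  -- The factor 6 closes the induction: full sums are at most 3/2 and 2, and 3/2 * 2 = 6 * (1/2).
  induction n with
  | zero => norm_num
  | succ n ih =>
    have sum_x : ∑ i ∈ range (n + 1), x i ≤ 3 / 2 := by rw [sum_range_succ']; linarith
    have sum_y : ∑ i ∈ range (n + 1), y i ≤ 2 := by rw [sum_range_succ']; linarith
    have step_x : ∑ j ∈ range (n + 1), x (j + 1) ≤ 1 / 2 := by
      have : 6 * ∑ j ∈ range (n + 1), x (j + 1) ≤ 3 / 2 * 2 := calc
        _ ≤ ∑ j ∈ range (n + 1), ∑ i ∈ range (j + 1), x i * y (j - i) := by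
          rw [mul_sum]
          exact sum_le_sum fun j _ => hxy j
        _ ≤ (∑ i ∈ range (n + 1), x i) * ∑ i ∈ range (n + 1), y i :=
          sum_range_sum_mul_le_mul_sum hx hy _
        _ ≤ 3 / 2 * 2 := mul_le_mul sum_x sum_y (sum_nonneg fun i _ => hy i) (by norm_num)
      linarith
    refine ⟨step_x, ?_⟩
    calc ∑ j ∈ range (n + 1), y (j + 1)
        ≤ ∑ j ∈ range (n + 1), ∑ i ∈ range (j + 1), y i * x (j - i + 1) := by
          refine sum_le_sum fun j _ => (hyx j).trans_eq <| sum_congr rfl fun i hi => ?_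
          rw [Nat.sub_add_comm (mem_range_succ_iff.mp hi)]
      _ ≤ (∑ i ∈ range (n + 1), y i) * ∑ j ∈ range (n + 1), x (j + 1) :=
          sum_range_sum_mul_le_mul_sum hy (fun j => hx (j + 1)) _
      _ ≤ 2 * (1 / 2) := mul_le_mul sum_y step_x (sum_nonneg fun j _ => hx (j + 1)) zero_le_two
      _ = 1 := by norm_num

lemma pow_smul_sum_range_mul {R A : Type*} [CommSemiring R] [Semiring A] [Algebra R A]
    (t : R) (U V : ℕ → A) (m : ℕ) :
    t ^ m • ∑ i ∈ range (m + 1), U i * V (m - i) =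
      ∑ i ∈ range (m + 1), (t ^ i • U i) * (t ^ (m - i) • V (m - i)) := by
  rw [smul_sum]
  refine sum_congr rfl fun i hi => ?_
  rw [smul_mul_smul_comm, ← pow_add, Nat.add_sub_cancel' (mem_range_succ_iff.mp hi)]

end Convolution

section PowerSeries

variable {𝕜 F : Type*} [NormedField 𝕜] [NormedAddCommGroup F] [NormedSpace 𝕜 F] {U : ℕ → F}
  {t : 𝕜} {r C : ℝ}

lemma summable_norm_pow_smul_of_sum_range_le (hU : ∀ n, ∑ j ∈ range n, r ^ j * ‖U j‖ ≤ C)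
    (ht : ‖t‖ ≤ r) : Summable fun j => ‖t ^ j • U j‖ := by
  refine summable_of_sum_range_le (c := C) (fun j => norm_nonneg _) fun n =>
    (sum_le_sum fun j _ => ?_).trans (hU n)
  rw [norm_smul, norm_pow]
  gcongr

lemma norm_tsum_pow_smul_sub_sum_range_le [CompleteSpace F]
    (hU : ∀ n, ∑ j ∈ range n, r ^ j * ‖U j‖ ≤ C) (hr : 0 < r) (ht : ‖t‖ ≤ r) (n : ℕ) :
    ‖∑' j, t ^ j • U j - ∑ j ∈ range n, t ^ j • U j‖ ≤ C * (‖t‖ / r) ^ n := by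
  have htr : ‖t‖ / r ≤ 1 := (div_le_one hr).mpr ht
  have term_le (j : ℕ) : ‖t ^ (j + n) • U (j + n)‖ ≤
      r ^ (j + n) * ‖U (j + n)‖ * (‖t‖ / r) ^ n := calc
    _ = r ^ (j + n) * ‖U (j + n)‖ * (‖t‖ / r) ^ (j + n) := by
      rw [norm_smul, norm_pow, div_pow]
      field_simp
    _ ≤ _ := mul_le_mul_of_nonneg_left
      (pow_le_pow_of_le_one (by positivity) htr (Nat.le_add_left n j)) (by positivity)
  have partial_sum_le (m : ℕ) : ‖∑ j ∈ range m, t ^ (j + n) • U (j + n)‖ ≤ C * (‖t‖ / r) ^ n := calc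
    _ ≤ ∑ j ∈ range m, r ^ (j + n) * ‖U (j + n)‖ * (‖t‖ / r) ^ n :=
      norm_sum_le_of_le _ fun j _ => term_le j
    _ = (∑ j ∈ range m, r ^ (n + j) * ‖U (n + j)‖) * (‖t‖ / r) ^ n := by
      simp only [sum_mul, add_comm n]
    _ ≤ C * (‖t‖ / r) ^ n := by
      gcongr
      refine le_trans ?_ (hU (n + m))
      rw [sum_range_add]
      exact le_add_of_nonneg_left (sum_nonneg fun j _ => by positivity)
  have hasSum_tail := (hasSum_nat_add_iff' n).mpr
    (summable_norm_pow_smul_of_sum_range_le hU ht).of_norm.hasSum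
  exact le_of_tendsto hasSum_tail.tendsto_sum_nat.norm (Eventually.of_forall partial_sum_le)

lemma hasSum_pow_smul_sum_range_mul {𝔸 : Type*} [NormedRing 𝔸] [NormedAlgebra 𝕜 𝔸]
    [CompleteSpace 𝔸] {U V : ℕ → 𝔸} (hU : Summable fun j => ‖t ^ j • U j‖)
    (hV : Summable fun j => ‖t ^ j • V j‖) :
    HasSum (fun m => t ^ m • ∑ i ∈ range (m + 1), U i * V (m - i))
      ((∑' j, t ^ j • U j) * ∑' j, t ^ j • V j) := by
  simp only [pow_smul_sum_range_mul]
  exact hasSum_sum_range_mul_of_summable_norm (f := fun j => t ^ j • U j)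
    (g := fun j => t ^ j • V j) hU hV

end PowerSeries

section NormedRing

variable {𝔸 : Type*} [NormedRing 𝔸]

lemma norm_lie_le_two_mul (a x : 𝔸) : ‖⁅a, x⁆‖ ≤ 2 * ‖a‖ * ‖x‖ := calc
  ‖a * x - x * a‖ ≤ ‖a * x‖ + ‖x * a‖ := norm_sub_le _ _
  _ ≤ ‖a‖ * ‖x‖ + ‖x‖ * ‖a‖ := add_le_add (norm_mul_le _ _) (norm_mul_le _ _)
  _ = 2 * ‖a‖ * ‖x‖ := by ring

lemma hasSum_lie_left {ι : Type*} {f : ι → 𝔸} {x : 𝔸} (hf : HasSum f x) (a : 𝔸) :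
    HasSum (fun i => ⁅a, f i⁆) ⁅a, x⁆ :=
  (hf.mul_left a).sub (hf.mul_right a)

lemma norm_le_three_halves_of_norm_one_sub_le (h1 : ‖(1 : 𝔸)‖ ≤ 1) {S : 𝔸}
    (hS : ‖1 - S‖ ≤ 1 / 2) : ‖S‖ ≤ 3 / 2 := by
  have := norm_sub_le (1 : 𝔸) (1 - S)
  rw [sub_sub_cancel] at this
  linarith

variable [CompleteSpace 𝔸]

lemma isUnit_of_norm_one_sub_lt_one_s4 {S : 𝔸} (hS : ‖1 - S‖ < 1) : IsUnit S := by
  simpa only [sub_sub_cancel] using isUnit_one_sub_of_norm_lt_one hS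

lemma norm_inverse_le_two_of_norm_one_sub_le (h1 : ‖(1 : 𝔸)‖ ≤ 1) {S : 𝔸}
    (hS : ‖1 - S‖ ≤ 1 / 2) : ‖S⁻¹ʳ‖ ≤ 2 := by
  have hlt : ‖1 - S‖ < 1 := by linarith
  calc ‖S⁻¹ʳ‖ = ‖∑' n : ℕ, (1 - S) ^ n‖ := by
        rw [geom_series_eq_inverse _ hlt, sub_sub_cancel]
    _ ≤ ‖(1 : 𝔸)‖ - 1 + (1 - ‖1 - S‖)⁻¹ := tsum_geometric_le_of_norm_lt_one _ hlt
    _ ≤ 0 + (1 - 1 / 2)⁻¹ := by gcongr; linarith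
    _ = 2 := by norm_num

lemma norm_conj_sub_conj_le (h1 : ‖(1 : 𝔸)‖ ≤ 1) (b : 𝔸) {S S' : 𝔸} (hS : ‖1 - S‖ ≤ 1 / 2)
    (hS' : ‖1 - S'‖ ≤ 1 / 2) :
    ‖S * b * S⁻¹ʳ - S' * b * S'⁻¹ʳ‖ ≤ 8 * ‖b‖ * ‖S - S'‖ := by
  have isUnit_S : IsUnit S := isUnit_of_norm_one_sub_lt_one_s4 (by linarith)
  have isUnit_S' : IsUnit S' := isUnit_of_norm_one_sub_lt_one_s4 (by linarith)
  have norm_S' : ‖S'‖ ≤ 3 / 2 := norm_le_three_halves_of_norm_one_sub_le h1 hS'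
  have norm_inv : ‖S⁻¹ʳ‖ ≤ 2 := norm_inverse_le_two_of_norm_one_sub_le h1 hS
  have norm_inv' : ‖S'⁻¹ʳ‖ ≤ 2 := norm_inverse_le_two_of_norm_one_sub_le h1 hS'
  have norm_inv_sub : ‖S⁻¹ʳ - S'⁻¹ʳ‖ ≤ 2 * ‖S - S'‖ * 2 := by
    rw [Ring.inverse_sub_inverse (iff_of_true isUnit_S isUnit_S')]
    exact norm_mul_le_of_le (norm_mul_le_of_le norm_inv (norm_sub_rev _ _).le) norm_inv'
  calc ‖S * b * S⁻¹ʳ - S' * b * S'⁻¹ʳ‖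
      = ‖(S - S') * b * S⁻¹ʳ + S' * b * (S⁻¹ʳ - S'⁻¹ʳ)‖ := by congr 1; noncomm_ring
    _ ≤ ‖S - S'‖ * ‖b‖ * 2 + 3 / 2 * ‖b‖ * (2 * ‖S - S'‖ * 2) :=
        norm_add_le_of_le (norm_mul_le_of_le (norm_mul_le _ _) norm_inv)
          (norm_mul_le_of_le (norm_mul_le_of_le norm_S' le_rfl) norm_inv_sub)
    _ = 8 * ‖b‖ * ‖S - S'‖ := by ring

end NormedRing

lemma smul_mul_mul_inverse_smul {𝕜 A : Type*} [Field 𝕜] [Ring A] [Algebra 𝕜 A] {c : 𝕜}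
    (hc : c ≠ 0) (S b : A) : (c • S) * b * (c • S)⁻¹ʳ = S * b * S⁻¹ʳ := by
  have hinv : (algebraMap 𝕜 A c)⁻¹ʳ = algebraMap 𝕜 A c⁻¹ :=
    Ring.inverse_unit ((Units.mk0 c hc).map (algebraMap 𝕜 A).toMonoidHom)
  have hsmul : (c • S)⁻¹ʳ = c⁻¹ • S⁻¹ʳ := by
    rw [Algebra.smul_def, Ring.inverse_mul (.inl (hc.isUnit.map _)), hinv, ← Algebra.commutes,
      ← Algebra.smul_def]
  rw [hsmul, smul_mul_assoc, smul_mul_smul_comm, mul_inv_cancel₀ hc, one_smul]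

section Defect

variable {𝕜 𝔸 : Type*} [NormedField 𝕜] [NormedRing 𝔸] [NormedAlgebra 𝕜 𝔸]

/-- The amount by which `S` fails to solve the equation `S = 1 + c [a, S b S⁻¹]`. The inverse is
`Ring.inverse`, so the value is meaningful only for invertible `S`. -/
noncomputable def conjDefect (a b : 𝔸) (c : 𝕜) (S : 𝔸) : 𝔸 :=
  S - 1 - c • ⁅a, S * b * S⁻¹ʳ⁆

lemma norm_conjDefect_sub_conjDefect_le [CompleteSpace 𝔸] (h1 : ‖(1 : 𝔸)‖ ≤ 1) (a b : 𝔸) (c : 𝕜)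
    {S S' : 𝔸} (hS : ‖1 - S‖ ≤ 1 / 2) (hS' : ‖1 - S'‖ ≤ 1 / 2) :
    ‖conjDefect a b c S - conjDefect a b c S'‖ ≤
      (1 + 16 * (‖c‖ * ‖a‖ * ‖b‖)) * ‖S - S'‖ := by
  set D := S * b * S⁻¹ʳ - S' * b * S'⁻¹ʳ with hD
  calc ‖conjDefect a b c S - conjDefect a b c S'‖ = ‖(S - S') - c • ⁅a, D⁆‖ := by
        simp only [conjDefect, hD, Ring.lie_def, mul_sub, sub_mul, smul_sub]
        congr 1
        abel
    _ ≤ ‖S - S'‖ + ‖c‖ * (2 * ‖a‖ * (8 * ‖b‖ * ‖S - S'‖)) := by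
        refine norm_sub_le_of_le le_rfl ((norm_smul_le _ _).trans ?_)
        gcongr
        refine (norm_lie_le_two_mul a D).trans ?_
        gcongr
        exact norm_conj_sub_conj_le h1 b hS hS'
    _ = (1 + 16 * (‖c‖ * ‖a‖ * ‖b‖)) * ‖S - S'‖ := by ring

end Defect

/-- `S = Σ tʲ Aⱼ` is the formal power series solution of `S = 1 + ε t [a, S b S⁻¹]`, and
`Σ tʲ Bⱼ` is its formal inverse, expressed through the recursions for the coefficients. -/
structure IsFormalSolution {𝕜 𝔸 : Type*} [Ring 𝔸] [SMul 𝕜 𝔸] (a b : 𝔸) (ε : 𝕜) (A B : ℕ → 𝔸) :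
    Prop where
  zero : A 0 = 1
  inv_zero : B 0 = 1
  succ (j : ℕ) : A (j + 1) = ε • ∑ i ∈ range (j + 1), ⁅a, A i * b * B (j - i)⁆
  inv_succ (j : ℕ) : B (j + 1) = -∑ i ∈ range (j + 1), B i * A (j + 1 - i)

namespace IsFormalSolution

variable {𝕜 𝔸 : Type*} [NormedField 𝕜] [NormedRing 𝔸] [NormedAlgebra 𝕜 𝔸] {a b : 𝔸} {ε t : 𝕜}
  {A B : ℕ → 𝔸} {r : ℝ}

lemma sum_inv_mul_succ_eq_zero (h : IsFormalSolution a b ε A B) (m : ℕ) :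
    ∑ i ∈ range (m + 1 + 1), B i * A (m + 1 - i) = 0 := by
  rw [sum_range_succ, Nat.sub_self, h.zero, mul_one, h.inv_succ, add_neg_cancel]

lemma six_mul_pow_mul_norm_succ_le (h : IsFormalSolution a b ε A B) (hr0 : 0 ≤ r)
    (hr : 12 * (‖ε‖ * ‖a‖ * ‖b‖) * r ≤ 1) (j : ℕ) :
    6 * (r ^ (j + 1) * ‖A (j + 1)‖) ≤
      ∑ i ∈ range (j + 1), r ^ i * ‖A i‖ * (r ^ (j - i) * ‖B (j - i)‖) := by
  set P := ∑ i ∈ range (j + 1), ‖A i‖ * ‖B (j - i)‖ with hP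
  have norm_succ : ‖A (j + 1)‖ ≤ ‖ε‖ * (2 * ‖a‖ * ‖b‖ * P) := by
    rw [h.succ, hP, mul_sum]
    refine (norm_smul_le _ _).trans ?_
    gcongr
    refine norm_sum_le_of_le _ fun i _ => ?_
    calc ‖⁅a, A i * b * B (j - i)⁆‖ ≤ 2 * ‖a‖ * ‖A i * b * B (j - i)‖ := norm_lie_le_two_mul _ _
      _ ≤ 2 * ‖a‖ * (‖A i‖ * ‖b‖ * ‖B (j - i)‖) := by
        gcongr
        exact norm_mul₃_le
      _ = 2 * ‖a‖ * ‖b‖ * (‖A i‖ * ‖B (j - i)‖) := by ring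
  calc 6 * (r ^ (j + 1) * ‖A (j + 1)‖)
      ≤ 6 * (r ^ (j + 1) * (‖ε‖ * (2 * ‖a‖ * ‖b‖ * P))) := by gcongr
    _ = 12 * (‖ε‖ * ‖a‖ * ‖b‖) * r * (r ^ j * P) := by ring
    _ ≤ r ^ j * P := mul_le_of_le_one_left (by positivity) hr
    _ = _ := pow_smul_sum_range_mul r (fun i => ‖A i‖) (fun i => ‖B i‖) j

lemma pow_mul_norm_inv_succ_le (h : IsFormalSolution a b ε A B) (hr0 : 0 ≤ r) (j : ℕ) :
    r ^ (j + 1) * ‖B (j + 1)‖ ≤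
      ∑ i ∈ range (j + 1), r ^ i * ‖B i‖ * (r ^ (j + 1 - i) * ‖A (j + 1 - i)‖) := by
  have norm_succ : ‖B (j + 1)‖ ≤ ∑ i ∈ range (j + 1), ‖B i‖ * ‖A (j + 1 - i)‖ := by
    rw [h.inv_succ, norm_neg]
    exact norm_sum_le_of_le _ fun i _ => norm_mul_le _ _
  refine (mul_le_mul_of_nonneg_left norm_succ (by positivity)).trans_eq ?_
  rw [mul_sum]
  refine sum_congr rfl fun i hi => ?_
  rw [mul_mul_mul_comm, ← pow_add, Nat.add_sub_cancel' (mem_range.mp hi).le]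

lemma sum_range_pow_mul_norm_succ_le (h : IsFormalSolution a b ε A B) (h1 : ‖(1 : 𝔸)‖ ≤ 1)
    (hr0 : 0 ≤ r) (hr : 12 * (‖ε‖ * ‖a‖ * ‖b‖) * r ≤ 1) (n : ℕ) :
    ∑ j ∈ range n, r ^ (j + 1) * ‖A (j + 1)‖ ≤ 1 / 2 ∧
      ∑ j ∈ range n, r ^ (j + 1) * ‖B (j + 1)‖ ≤ 1 := by
  refine sum_range_succ_le_of_convolution_le (x := fun j => r ^ j * ‖A j‖)
    (y := fun j => r ^ j * ‖B j‖) (fun _ => by positivity) (fun _ => by positivity) ?_ ?_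
    (h.six_mul_pow_mul_norm_succ_le hr0 hr) (h.pow_mul_norm_inv_succ_le hr0) n
  · simpa only [pow_zero, one_mul, h.zero] using h1
  · simpa only [pow_zero, one_mul, h.inv_zero] using h1

lemma sum_range_pow_mul_norm_le (h : IsFormalSolution a b ε A B) (h1 : ‖(1 : 𝔸)‖ ≤ 1)
    (hr0 : 0 ≤ r) (hr : 12 * (‖ε‖ * ‖a‖ * ‖b‖) * r ≤ 1) (n : ℕ) :
    ∑ j ∈ range n, r ^ j * ‖A j‖ ≤ 3 / 2 ∧ ∑ j ∈ range n, r ^ j * ‖B j‖ ≤ 2 := by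
  obtain ⟨hA, hB⟩ := h.sum_range_pow_mul_norm_succ_le h1 hr0 hr n
  have le_succ (U : ℕ → 𝔸) : ∑ j ∈ range n, r ^ j * ‖U j‖ ≤
      ∑ j ∈ range n, r ^ (j + 1) * ‖U (j + 1)‖ + ‖U 0‖ := by
    refine (sum_le_sum_of_subset_of_nonneg (range_subset_range.mpr n.le_succ)
      fun j _ _ => by positivity).trans_eq ?_
    rw [sum_range_succ', pow_zero, one_mul]
  have hA' := le_succ A
  have hB' := le_succ B
  rw [h.zero] at hA'
  rw [h.inv_zero] at hB'
  constructor <;> linarith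

lemma norm_one_sub_sum_range_le (h : IsFormalSolution a b ε A B) (h1 : ‖(1 : 𝔸)‖ ≤ 1)
    (hr : 12 * (‖ε‖ * ‖a‖ * ‖b‖) * r ≤ 1) (ht : ‖t‖ ≤ r) (N : ℕ) :
    ‖1 - ∑ j ∈ range (N + 1), t ^ j • A j‖ ≤ 1 / 2 := by
  rw [sum_range_succ', h.zero, pow_zero, one_smul, norm_sub_rev, add_sub_cancel_right]
  refine (norm_sum_le_of_le _ fun j _ => ?_).trans
    (h.sum_range_pow_mul_norm_succ_le h1 ((norm_nonneg t).trans ht) hr N).1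
  rw [norm_smul, norm_pow]
  gcongr

variable [CompleteSpace 𝔸]

lemma norm_one_sub_tsum_le (h : IsFormalSolution a b ε A B) (h1 : ‖(1 : 𝔸)‖ ≤ 1)
    (hr : 12 * (‖ε‖ * ‖a‖ * ‖b‖) * r ≤ 1) (ht : ‖t‖ ≤ r) :
    ‖1 - ∑' j, t ^ j • A j‖ ≤ 1 / 2 := by
  have summable_A := summable_norm_pow_smul_of_sum_range_le
    (fun n => (h.sum_range_pow_mul_norm_le h1 ((norm_nonneg t).trans ht) hr n).1) ht
  have tendsto_sum := summable_A.of_norm.hasSum.tendsto_sum_nat.comp (tendsto_add_atTop_nat 1)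
  exact le_of_tendsto (tendsto_sum.const_sub 1).norm
    (Eventually.of_forall fun N => h.norm_one_sub_sum_range_le h1 hr ht N)

lemma tsum_inv_mul_tsum_eq_one (h : IsFormalSolution a b ε A B)
    (hA : Summable fun j => ‖t ^ j • A j‖) (hB : Summable fun j => ‖t ^ j • B j‖) :
    (∑' j, t ^ j • B j) * ∑' j, t ^ j • A j = 1 := by
  refine (hasSum_pow_smul_sum_range_mul hB hA).unique ?_
  have term_zero : t ^ 0 • ∑ i ∈ range (0 + 1), B i * A (0 - i) = 1 := by
    simp [h.zero, h.inv_zero]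
  rw [← term_zero]
  refine hasSum_single 0 fun m hm => ?_
  obtain ⟨m, rfl⟩ := Nat.exists_eq_add_one_of_ne_zero hm
  rw [h.sum_inv_mul_succ_eq_zero, smul_zero]

lemma tsum_sub_one_eq_smul_lie (h : IsFormalSolution a b ε A B)
    (hA : Summable fun j => ‖t ^ j • A j‖) (hB : Summable fun j => ‖t ^ j • B j‖) :
    ∑' j, t ^ j • A j - 1 =
      (ε * t) • ⁅a, (∑' j, t ^ j • A j) * b * ∑' j, t ^ j • B j⁆ := by
  have hasSum_conj : HasSum (fun m => t ^ m • ∑ i ∈ range (m + 1), A i * b * B (m - i))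
      ((∑' j, t ^ j • A j) * b * ∑' j, t ^ j • B j) := by
    have hAb : Summable fun j => ‖t ^ j • (A j * b)‖ := by
      simp only [← smul_mul_assoc]
      exact (hA.mul_right ‖b‖).of_nonneg_of_le (fun _ => norm_nonneg _) fun _ => norm_mul_le _ _
    have tsum_mul_b : (∑' j, t ^ j • A j) * b = ∑' j, t ^ j • (A j * b) := by
      simp only [← smul_mul_assoc]
      exact (hA.of_norm.tsum_mul_right b).symm
    rw [tsum_mul_b]
    exact hasSum_pow_smul_sum_range_mul hAb hB
  have term_eq (m : ℕ) : (ε * t) • ⁅a, t ^ m • ∑ i ∈ range (m + 1), A i * b * B (m - i)⁆ =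
      t ^ (m + 1) • A (m + 1) := by
    rw [h.succ]
    simp only [Ring.lie_def, mul_smul_comm, smul_mul_assoc, ← smul_sub, mul_sum, sum_mul,
      ← sum_sub_distrib, smul_smul]
    congr 1
    ring
  have hasSum_lie := (hasSum_lie_left hasSum_conj a).const_smul (ε * t)
  simp only [term_eq] at hasSum_lie
  have hasSum_succ := (hasSum_nat_add_iff' 1).mpr hA.of_norm.hasSum
  rw [sum_range_one, pow_zero, one_smul, h.zero] at hasSum_succ
  exact hasSum_succ.unique hasSum_lie

lemma conjDefect_tsum_eq_zero (h : IsFormalSolution a b ε A B) (h1 : ‖(1 : 𝔸)‖ ≤ 1)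
    (hr : 12 * (‖ε‖ * ‖a‖ * ‖b‖) * r ≤ 1) (ht : ‖t‖ ≤ r) :
    conjDefect a b (ε * t) (∑' j, t ^ j • A j) = 0 := by
  have sum_le := h.sum_range_pow_mul_norm_le h1 ((norm_nonneg t).trans ht) hr
  have summable_A := summable_norm_pow_smul_of_sum_range_le (fun n => (sum_le n).1) ht
  have summable_B := summable_norm_pow_smul_of_sum_range_le (fun n => (sum_le n).2) ht
  have isUnit_S : IsUnit (∑' j, t ^ j • A j) :=
    isUnit_of_norm_one_sub_lt_one_s4 ((h.norm_one_sub_tsum_le h1 hr ht).trans_lt (by norm_num))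
  have inverse_eq : (∑' j, t ^ j • A j)⁻¹ʳ = ∑' j, t ^ j • B j := by
    rw [← one_mul (_⁻¹ʳ), eq_comm, Ring.eq_mul_inverse_iff_mul_eq _ _ _ isUnit_S]
    exact h.tsum_inv_mul_tsum_eq_one summable_A summable_B
  rw [conjDefect, inverse_eq, sub_eq_zero]
  exact h.tsum_sub_one_eq_smul_lie summable_A summable_B

lemma norm_conjDefect_sum_range_le (h : IsFormalSolution a b ε A B) (h1 : ‖(1 : 𝔸)‖ ≤ 1)
    (hr0 : 0 < r) (hr : 12 * (‖ε‖ * ‖a‖ * ‖b‖) * r ≤ 1) (ht : ‖t‖ ≤ r) (N : ℕ) :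
    ‖conjDefect a b (ε * t) (∑ j ∈ range (N + 1), t ^ j • A j)‖ ≤
      4 * (‖t‖ / r) ^ (N + 1) := by
  set S := ∑' j, t ^ j • A j
  set S' := ∑ j ∈ range (N + 1), t ^ j • A j
  have tail_le : ‖S' - S‖ ≤ 3 / 2 * (‖t‖ / r) ^ (N + 1) := by
    rw [norm_sub_rev]
    exact norm_tsum_pow_smul_sub_sum_range_le
      (fun n => (h.sum_range_pow_mul_norm_le h1 hr0.le hr n).1) hr0 ht (N + 1)
  have coeff_le : ‖ε * t‖ * ‖a‖ * ‖b‖ ≤ 1 / 12 := calc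
    _ = ‖ε‖ * ‖a‖ * ‖b‖ * ‖t‖ := by rw [norm_mul]; ring
    _ ≤ ‖ε‖ * ‖a‖ * ‖b‖ * r := by gcongr
    _ ≤ 1 / 12 := by linarith
  calc ‖conjDefect a b (ε * t) S'‖
      = ‖conjDefect a b (ε * t) S' - conjDefect a b (ε * t) S‖ := by
        rw [h.conjDefect_tsum_eq_zero h1 hr ht, sub_zero]
    _ ≤ (1 + 16 * (‖ε * t‖ * ‖a‖ * ‖b‖)) * ‖S' - S‖ :=
        norm_conjDefect_sub_conjDefect_le h1 a b (ε * t) (h.norm_one_sub_sum_range_le h1 hr ht N)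
          (h.norm_one_sub_tsum_le h1 hr ht)
    _ ≤ (1 + 16 * (1 / 12)) * (3 / 2 * (‖t‖ / r) ^ (N + 1)) := by gcongr
    _ ≤ 4 * (‖t‖ / r) ^ (N + 1) := by
        have : 0 ≤ (‖t‖ / r) ^ (N + 1) := by positivity
        linarith

end IsFormalSolution

theorem stmt4_general {𝔸 : ℕ → Type*} [∀ k, NormedRing (𝔸 k)] [∀ k, NormedAlgebra ℝ (𝔸 k)]
    [∀ k, CompleteSpace (𝔸 k)] (h1 : ∀ k, ‖(1 : 𝔸 k)‖ ≤ 1) (a b : ∀ k, 𝔸 k) (ε : ℕ → ℝ) {C : ℝ}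
    (hC : ∀ k, ‖ε k‖ * ‖a k‖ * ‖b k‖ ≤ C) (χ : ℕ → ℝ) (hχ : ∀ k, 0 < k → χ k ≠ 0)
    (A B : ∀ k, ℕ → 𝔸 k) (hAB : ∀ k, IsFormalSolution (a k) (b k) (ε k) (A k) (B k))
    (N : ℕ) (R : ∀ k, 𝔸 k)
    (hR : ∀ k, R k = (χ k)⁻¹ • ∑ j ∈ range (N + 1), ((k : ℝ) ^ j)⁻¹ • A k j) :
    ∃ D : ℝ, 0 < D ∧ ∃ k₀ : ℕ, ∀ k ≥ k₀, IsUnit (R k) ∧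
      ‖χ k • R k - 1 - (ε k * (k : ℝ)⁻¹) •
        (a k * (R k * b k * (R k)⁻¹ʳ) - (R k * b k * (R k)⁻¹ʳ) * a k)‖ ≤
        D * ((k : ℝ) ^ (N + 1))⁻¹ := by
  have hC0 : 0 ≤ C := le_trans (by positivity) (hC 0)
  set ρ : ℝ := 12 * C + 1
  have hρ0 : 0 < ρ := by positivity
  have smallness (k : ℕ) : 12 * (‖ε k‖ * ‖a k‖ * ‖b k‖) * ρ⁻¹ ≤ 1 := by
    rw [← div_eq_mul_inv, div_le_one hρ0]
    linarith [hC k]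
  refine ⟨4 * ρ ^ (N + 1), by positivity, ⌈ρ⌉₊, fun k hk => ?_⟩
  have hρk : ρ ≤ k := Nat.ceil_le.mp hk
  have hk0 : (0 : ℝ) < k := hρ0.trans_le hρk
  have hχk : χ k ≠ 0 := hχ k (Nat.cast_pos.mp hk0)
  have norm_t : ‖(k : ℝ)⁻¹‖ = (k : ℝ)⁻¹ := Real.norm_of_nonneg (by positivity)
  have ht : ‖(k : ℝ)⁻¹‖ ≤ ρ⁻¹ := norm_t.trans_le (inv_anti₀ hρ0 hρk)
  set S := ∑ j ∈ range (N + 1), (k : ℝ)⁻¹ ^ j • A k j with hS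
  have hRS : R k = (χ k)⁻¹ • S := by simp only [hR, hS, inv_pow]
  have isUnit_S : IsUnit S := isUnit_of_norm_one_sub_lt_one_s4
    (((hAB k).norm_one_sub_sum_range_le (h1 k) (smallness k) ht N).trans_lt (by norm_num))
  refine ⟨hRS ▸ isUnit_S.smul (Units.mk0 _ (inv_ne_zero hχk)), ?_⟩
  rw [hRS, smul_mul_mul_inverse_smul (inv_ne_zero hχk), smul_inv_smul₀ hχk]
  refine ((hAB k).norm_conjDefect_sum_range_le (h1 k) (inv_pos.mpr hρ0) (smallness k) ht
    N).trans_eq ?_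
  rw [norm_t, div_inv_eq_mul, mul_pow, inv_pow]
  ring

/-- In the Setup (see hypotheses), fix `N ≥ 0` and define
`R k := (χ k)⁻¹ • Σ_{j=0}^{N} k^{−j} • A k j`.  Then there exist `D > 0` and `k₀` such that for
all `k ≥ k₀` the operator `R k` is invertible and
`‖χ k • R k − Id − ε k · k⁻¹ · [α k, R k ⬝ β k ⬝ (R k)⁻¹]‖ ≤ D·k^{−N−1}`,
where `β k = (α k)*`. -/
theorem stmt4 (V : ℕ → Type*) [∀ k, NormedAddCommGroup (V k)]
    [∀ k, InnerProductSpace ℂ (V k)] [∀ k, FiniteDimensional ℂ (V k)]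
    (α : ∀ k, V k →L[ℂ] V k) (M : ℝ) (hM : 0 < M) (hα : ∀ k, ‖α k‖ ≤ M)
    (n : ℕ) (hn : 1 ≤ n) (c₁ c₂ E : ℝ) (hc₁ : 0 < c₁) (hc₂ : 0 < c₂) (hE : 0 < E)
    (χ : ℕ → ℝ) (hχ : ∀ k : ℕ, 0 < k → c₁ * (k : ℝ) ^ n ≤ χ k ∧ χ k ≤ c₂ * (k : ℝ) ^ n)
    (ε : ℕ → ℝ) (hε : ∀ k, 0 < ε k ∧ ε k ≤ E)
    (A B : ∀ k : ℕ, ℕ → (V k →L[ℂ] V k))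
    (hA0 : ∀ k, A k 0 = 1) (hB0 : ∀ k, B k 0 = 1)
    (hArec : ∀ k j, A k (j + 1) = ε k • ∑ i ∈ Finset.range (j + 1),
      (α k * (A k i * ContinuousLinearMap.adjoint (α k) * B k (j - i)) -
        (A k i * ContinuousLinearMap.adjoint (α k) * B k (j - i)) * α k))
    (hBrec : ∀ k j, B k (j + 1) = -∑ i ∈ Finset.range (j + 1), B k i * A k (j + 1 - i))
    (N : ℕ) (R : ∀ k : ℕ, V k →L[ℂ] V k)
    (hR : ∀ k, R k = (χ k)⁻¹ • ∑ j ∈ Finset.range (N + 1), ((k : ℝ) ^ j)⁻¹ • A k j) :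
    ∃ D : ℝ, 0 < D ∧ ∃ k₀ : ℕ, ∀ k ≥ k₀, IsUnit (R k) ∧
      ‖χ k • R k - 1 - (ε k * (k : ℝ)⁻¹) •
        (α k * (R k * ContinuousLinearMap.adjoint (α k) * Ring.inverse (R k)) -
          (R k * ContinuousLinearMap.adjoint (α k) * Ring.inverse (R k)) * α k)‖ ≤
        D * ((k : ℝ) ^ (N + 1))⁻¹ := by
  have hC (k : ℕ) : ‖ε k‖ * ‖α k‖ * ‖ContinuousLinearMap.adjoint (α k)‖ ≤ E * M * M := by
    rw [LinearIsometryEquiv.norm_map, Real.norm_of_nonneg (hε k).1.le]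
    gcongr
    exacts [(hε k).2, hα k, hα k]
  have hχ0 (k : ℕ) (hk : 0 < k) : χ k ≠ 0 :=
    ((by positivity : 0 < c₁ * (k : ℝ) ^ n).trans_le (hχ k hk).1).ne'
  exact stmt4_general (fun _ => ContinuousLinearMap.norm_id_le) α _ ε hC χ hχ0 A B
    (fun k => ⟨hA0 k, hB0 k, hArec k, hBrec k⟩) N R hR
end

section
/- In the Setup below, fix an integer N ≥ 1. There exists C₀ > 0, depending only on N, M, E, c₁, c₂ and n, such that for every C ≥ C₀ the following holds: if P_k ∈ B_k(C) satisfies the equation P_k = χ_k⁻¹·(Id + ε_k k⁻¹·[α_k, P_k β_k P_k⁻¹]) for all sufficiently large k (P_k being invertible for such k), then there exist D > 0 and k₀ such that ‖χ_k P_k − Σ_{j=0}^{N} k^{−j} A_{j,k}‖ ≤ D·k^{−N−1} for all k ≥ k₀. -/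
/-!
Put `Q = χ P` and `t = 1/k`. The equation becomes `Q = 1 + ε t [α, Q β Q⁻¹]`, and the recursions for
`A` and `B` say that `S = ∑ t^j A_j` and `T = ∑ t^j B_j` satisfy `S = 1 + ε t [α, S β T]` and
`T S = 1` as formal power series in `t`. By hypothesis `Q` is within `O(t)` of the identity, so `Q`
and `Q⁻¹` are bounded, and this boundedness already starts an induction on `m` for the claim
`Q = ∑_{j<m} t^j A_j + O(t^m)`. Indeed an expansion of `Q` to order `m` yields one of `Q⁻¹` with
coefficients `B_j`, hence one of `[α, Q β Q⁻¹]` by Cauchy products, and the factor `t` in the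
equation turns the latter into an expansion of `Q` to order `m + 1`.
-/

open Filter Asymptotics Finset
open scoped Topology

section FormalSolution

theorem sum_pow_smul_mul_sum_pow_smul {K R : Type*} [CommSemiring K] [Semiring R] [Algebra K R]
    (t : K) (a b : ℕ → R) (m : ℕ) :
    (∑ j ∈ range m, t ^ j • a j) * ∑ j ∈ range m, t ^ j • b j =
      ∑ j ∈ range m, t ^ j • ∑ i ∈ range (j + 1), a i * b (j - i) +
        ∑ i ∈ range m, ∑ j ∈ Ico (m - i) m, t ^ (i + j) • (a i * b j) := by
  have cauchy : ∑ j ∈ range m, t ^ j • ∑ i ∈ range (j + 1), a i * b (j - i) =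
      ∑ i ∈ range m, ∑ j ∈ range (m - i), t ^ (i + j) • (a i * b j) := by
    rw [← sum_range_diag_flip m fun i j => t ^ (i + j) • (a i * b j)]
    refine sum_congr rfl fun j _ => ?_
    rw [smul_sum]
    refine sum_congr rfl fun i hi => ?_
    rw [Nat.add_sub_cancel' (mem_range_succ_iff.1 hi)]
  rw [cauchy, sum_mul_sum, ← sum_add_distrib]
  refine sum_congr rfl fun i _ => ?_
  rw [sum_range_add_sum_Ico _ (Nat.sub_le m i)]
  exact sum_congr rfl fun j _ => by rw [smul_mul_smul_comm, ← pow_add]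

variable {K R : Type*} [Ring R] [SMul K R]

/-- The recursions of the theorem for the coefficients `A_j`, `B_j`: the series `S = ∑ t^j A_j` and
`T = ∑ t^j B_j` solve `S = 1 + ε t [α, S β T]`, `T S = 1` as formal power series in `t`. -/
structure IsFormalSolution_s6 (ε : K) (α β : R) (A B : ℕ → R) : Prop where
  left_zero : A 0 = 1
  right_zero : B 0 = 1
  left_succ (j : ℕ) : A (j + 1) = ε • ∑ i ∈ range (j + 1),
    (α * (A i * β * B (j - i)) - A i * β * B (j - i) * α)
  right_succ (j : ℕ) : B (j + 1) = -∑ i ∈ range (j + 1), B i * A (j + 1 - i)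

theorem IsFormalSolution_s6.sum_mul_eq_ite {ε : K} {α β : R} {A B : ℕ → R}
    (h : IsFormalSolution_s6 ε α β A B) (j : ℕ) :
    ∑ i ∈ range (j + 1), B i * A (j - i) = if j = 0 then 1 else 0 := by
  cases j with
  | zero => simp [h.left_zero, h.right_zero]
  | succ j =>
    rw [sum_range_succ, Nat.sub_self, h.left_zero, mul_one, h.right_succ, add_neg_cancel,
      if_neg j.succ_ne_zero]

theorem IsFormalSolution_s6.pi {ι : Type*} {K R : ι → Type*} [∀ k, Ring (R k)]
    [∀ k, SMul (K k) (R k)] {ε : ∀ k, K k} {α β : ∀ k, R k}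
    {A B : ∀ k, ℕ → R k} (h : ∀ k, IsFormalSolution_s6 (ε k) (α k) (β k) (A k) (B k)) :
    IsFormalSolution_s6 ε α β (fun j k => A k j) fun j k => B k j where
  left_zero := funext fun k => (h k).left_zero
  right_zero := funext fun k => (h k).right_zero
  left_succ j := funext fun k => by simpa using (h k).left_succ j
  right_succ j := funext fun k => by simpa using (h k).right_succ j

end FormalSolution

section RightInverse

theorem smul_mul_inv_smul_eq_one {K R : Type*} [GroupWithZero K] [Monoid R] [MulAction K R]
    [IsScalarTower K R R] [SMulCommClass K R R] {c : K} {p r : R} (hc : c ≠ 0) (hpr : p * r = 1) :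
    c • p * c⁻¹ • r = 1 := by
  rw [smul_mul_smul_comm, mul_inv_cancel₀ hc, hpr, one_smul]

theorem norm_le_div_one_sub_of_mul_eq_one {R : Type*} [NormedRing R] {q r : R} {δ : ℝ}
    (hqr : q * r = 1) (hδ : δ < 1) (hq : ‖q - 1‖ ≤ δ) : ‖r‖ ≤ ‖(1 : R)‖ / (1 - δ) := by
  have hr : r = 1 - (q - 1) * r := by rw [sub_mul, hqr, one_mul, sub_sub_cancel]
  have hle : ‖r‖ ≤ ‖(1 : R)‖ + δ * ‖r‖ :=
    calc ‖r‖ = ‖1 - (q - 1) * r‖ := congrArg norm hr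
      _ ≤ ‖(1 : R)‖ + ‖(q - 1) * r‖ := norm_sub_le _ _
      _ ≤ ‖(1 : R)‖ + δ * ‖r‖ := by gcongr; exact norm_mul_le_of_le hq le_rfl
  rw [le_div_iff₀ (sub_pos.2 hδ)]
  linarith

variable {ι : Type*} {W : ι → Type*} [∀ k, NormedRing (W k)] {l : Filter ι} {q r : ∀ k, W k}

theorem isBoundedUnder_norm_of_tendsto_norm_sub_one
    (h1 : IsBoundedUnder (· ≤ ·) l fun k => ‖(1 : W k)‖)
    (hq : Tendsto (fun k => ‖q k - 1‖) l (𝓝 0)) : IsBoundedUnder (· ≤ ·) l fun k => ‖q k‖ :=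
  (isBoundedUnder_le_add h1 hq.isBoundedUnder_le).mono_le
    (.of_forall fun k => norm_le_norm_add_norm_sub' (q k) 1)

theorem isBoundedUnder_norm_right_inverse
    (h1 : IsBoundedUnder (· ≤ ·) l fun k => ‖(1 : W k)‖)
    (hq : Tendsto (fun k => ‖q k - 1‖) l (𝓝 0)) (hqr : ∀ᶠ k in l, q k * r k = 1) :
    IsBoundedUnder (· ≤ ·) l fun k => ‖r k‖ := by
  obtain ⟨c, hc⟩ := h1.eventually_le
  refine isBoundedUnder_of_eventually_le (a := c / (1 - 1 / 2)) ?_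
  filter_upwards [hc, hqr, hq.eventually_le_const one_half_pos] with k hck hk hqk
  exact (norm_le_div_one_sub_of_mul_eq_one hk one_half_lt_one hqk).trans (by gcongr)

end RightInverse

section Expansion

variable {𝕜 ι : Type*} [NormedField 𝕜] {W : ι → Type*} [∀ k, NormedRing (W k)]
  {l : Filter ι} {t : ι → 𝕜} {m : ℕ} {X Y : ∀ k, W k}

/-- The families `X` with `‖X k‖ = O(t k ^ m)` along `l`. The rings `W k` vary with `k`, so this is
not directly an instance of `IsBigO`. -/
def bigOPow (l : Filter ι) (t : ι → 𝕜) (m : ℕ) : AddSubgroup (∀ k, W k) where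
  carrier := {X | (fun k => ‖X k‖) =O[l] (t ^ m)}
  zero_mem' := by simp [isBigO_zero]
  add_mem' hX hY :=
    (IsBigO.of_norm_le fun k => by simpa using norm_add_le _ _).trans (hX.add hY)
  neg_mem' hX := by simpa using hX

theorem mem_bigOPow : X ∈ bigOPow l t m ↔ (fun k => ‖X k‖) =O[l] (t ^ m) :=
  Iff.rfl

theorem mem_bigOPow_zero :
    X ∈ bigOPow l t 0 ↔ IsBoundedUnder (· ≤ ·) l fun k => ‖X k‖ := by
  rw [mem_bigOPow, pow_zero]
  exact (isBigO_one_iff 𝕜).trans (by simp only [norm_norm])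

theorem mem_bigOPow_congr (hX : X ∈ bigOPow l t m) (hXY : ∀ᶠ k in l, X k = Y k) :
    Y ∈ bigOPow l t m :=
  IsBigO.congr' hX (hXY.mono fun _ hk => congrArg norm hk) .rfl

theorem bigOPow_antitone (ht : t =O[l] (1 : ι → 𝕜)) :
    Antitone fun m => bigOPow (W := W) l t m := by
  refine antitone_nat_of_succ_le fun m X hX => IsBigO.trans hX ?_
  exact ((isBigO_refl (t ^ m) l).mul ht).congr (fun k => by simp [pow_succ]) (by simp)

theorem mul_mem_bigOPow {a b : ℕ} (hX : X ∈ bigOPow l t a) (hY : Y ∈ bigOPow l t b) :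
    X * Y ∈ bigOPow l t (a + b) := by
  rw [mem_bigOPow, pow_add]
  exact (IsBigO.of_norm_le fun k => by simpa using norm_mul_le _ _).trans (IsBigO.mul hX hY)

variable [∀ k, NormedAlgebra 𝕜 (W k)]

theorem smul_mem_bigOPow {a b : ℕ} {s : ι → 𝕜} (hs : s =O[l] (t ^ a)) (hX : X ∈ bigOPow l t b) :
    s • X ∈ bigOPow l t (a + b) := by
  rw [mem_bigOPow, pow_add]
  exact (hs.norm_left.mul hX).congr_left fun k => (norm_smul _ _).symm

theorem bounded_smul_mem_bigOPow {s : ι → 𝕜} (hs : s =O[l] (1 : ι → 𝕜))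
    (hX : X ∈ bigOPow l t m) : s • X ∈ bigOPow l t m := by
  rw [← zero_add m]
  exact smul_mem_bigOPow (by rwa [pow_zero]) hX

theorem pow_smul_mem_bigOPow (j : ℕ) (hX : X ∈ bigOPow l t m) : t ^ j • X ∈ bigOPow l t (j + m) :=
  smul_mem_bigOPow (isBigO_refl _ _) hX

variable {q r : ∀ k, W k} {ε : ι → 𝕜} {α β : ∀ k, W k} {A B a b : ℕ → ∀ k, W k}

theorem IsFormalSolution_s6.mem_bigOPow_zero (h : IsFormalSolution_s6 ε α β A B)
    (h1 : (1 : ∀ k, W k) ∈ bigOPow l t 0) (hα : α ∈ bigOPow l t 0) (hβ : β ∈ bigOPow l t 0)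
    (hε : ε =O[l] (1 : ι → 𝕜)) (j : ℕ) : A j ∈ bigOPow l t 0 ∧ B j ∈ bigOPow l t 0 := by
  induction j using Nat.strong_induction_on with
  | _ j ih =>
    cases j with
    | zero => exact ⟨h.left_zero ▸ h1, h.right_zero ▸ h1⟩
    | succ j =>
      have hA : A (j + 1) ∈ bigOPow l t 0 := by
        rw [h.left_succ]
        refine bounded_smul_mem_bigOPow hε (sum_mem fun i hi => ?_)
        have hAβB := mul_mem_bigOPow (mul_mem_bigOPow (ih i (mem_range.1 hi)).1 hβ)
          (ih (j - i) (by lia)).2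
        exact sub_mem (mul_mem_bigOPow hα hAβB) (mul_mem_bigOPow hAβB hα)
      refine ⟨hA, ?_⟩
      rw [h.right_succ]
      refine neg_mem (sum_mem fun i hi => mul_mem_bigOPow (b := 0) (ih i (mem_range.1 hi)).2 ?_)
      cases i with
      | zero => exact hA
      | succ i => exact (ih (j + 1 - (i + 1)) (by lia)).1

/-- `X = ∑_{j<m} t^j a_j + O(t^m)`, the asymptotic expansion of `X` to order `m`. The coefficients
`a_j` may depend on `k`. -/
def HasExpansion (l : Filter ι) (t : ι → 𝕜) (X : ∀ k, W k) (a : ℕ → ∀ k, W k) (m : ℕ) : Prop :=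
  X - ∑ j ∈ range m, t ^ j • a j ∈ bigOPow l t m

theorem sum_pow_smul_mem_bigOPow_zero (ht : t =O[l] (1 : ι → 𝕜))
    (ha : ∀ j, a j ∈ bigOPow l t 0) (m : ℕ) :
    ∑ j ∈ range m, t ^ j • a j ∈ bigOPow l t 0 :=
  sum_mem fun j _ => bigOPow_antitone ht (Nat.zero_le _) (pow_smul_mem_bigOPow j (ha j))

theorem hasExpansion_sum_pow_smul (a : ℕ → ∀ k, W k) (m : ℕ) :
    HasExpansion l t (∑ j ∈ range m, t ^ j • a j) a m := by
  simp only [HasExpansion, sub_self, zero_mem]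

namespace HasExpansion

theorem congr (hX : HasExpansion l t X a m) (hXY : ∀ᶠ k in l, X k = Y k) :
    HasExpansion l t Y a m :=
  mem_bigOPow_congr hX (hXY.mono fun k hk => by simp only [Pi.sub_apply, hk])

theorem mem_bigOPow_zero (ht : t =O[l] (1 : ι → 𝕜)) (ha : ∀ j, a j ∈ bigOPow l t 0)
    (hX : HasExpansion l t X a m) : X ∈ bigOPow l t 0 := by
  simpa only [sub_add_cancel] using
    add_mem (bigOPow_antitone ht m.zero_le hX) (sum_pow_smul_mem_bigOPow_zero ht ha m)

theorem sub (hX : HasExpansion l t X a m) (hY : HasExpansion l t Y b m) :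
    HasExpansion l t (X - Y) (fun j => a j - b j) m := by
  have h := sub_mem hX hY
  rwa [sub_sub_sub_comm, ← sum_sub_distrib, sum_congr rfl fun j _ => (smul_sub _ _ _).symm] at h

theorem const_mul (hY : Y ∈ bigOPow l t 0) (hX : HasExpansion l t X a m) :
    HasExpansion l t (Y * X) (fun j => Y * a j) m := by
  have h := mul_mem_bigOPow hY hX
  simpa only [HasExpansion, zero_add, mul_sub, mul_sum, mul_smul_comm] using h

theorem mul_const (hX : HasExpansion l t X a m) (hY : Y ∈ bigOPow l t 0) :
    HasExpansion l t (X * Y) (fun j => a j * Y) m := by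
  have h := mul_mem_bigOPow hX hY
  simpa only [HasExpansion, add_zero, sub_mul, sum_mul, smul_mul_assoc] using h

theorem const_smul (hε : ε =O[l] (1 : ι → 𝕜)) (hX : HasExpansion l t X a m) :
    HasExpansion l t (ε • X) (fun j => ε • a j) m := by
  have h := bounded_smul_mem_bigOPow hε hX
  simpa only [HasExpansion, smul_sub, smul_sum, smul_comm ε] using h

theorem coeff_zero_add_smul (hX : HasExpansion l t X (fun j => a (j + 1)) m) :
    HasExpansion l t (a 0 + t • X) a (m + 1) := by
  have h := pow_smul_mem_bigOPow 1 hX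
  rw [add_comm 1 m, pow_one, smul_sub, smul_sum] at h
  simpa only [HasExpansion, sum_range_succ', pow_zero, one_smul, add_comm (a 0),
    add_sub_add_right_eq_sub, pow_succ', mul_smul] using h

theorem mul (ht : t =O[l] (1 : ι → 𝕜)) (ha : ∀ j, a j ∈ bigOPow l t 0)
    (hb : ∀ j, b j ∈ bigOPow l t 0) (hX : HasExpansion l t X a m)
    (hY : HasExpansion l t Y b m) :
    HasExpansion l t (X * Y) (fun j => ∑ i ∈ range (j + 1), a i * b (j - i)) m := by
  set S := ∑ j ∈ range m, t ^ j • a j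
  set T := ∑ j ∈ range m, t ^ j • b j
  have hleft : (X - S) * Y ∈ bigOPow l t m :=
    mul_mem_bigOPow hX (hY.mem_bigOPow_zero ht hb)
  have hright : S * (Y - T) ∈ bigOPow l t m := by
    simpa only [zero_add] using
      mul_mem_bigOPow (sum_pow_smul_mem_bigOPow_zero ht ha m) hY
  have htail : ∑ i ∈ range m, ∑ j ∈ Ico (m - i) m, t ^ (i + j) • (a i * b j) ∈ bigOPow l t m :=
    sum_mem fun i _ => sum_mem fun j hj => bigOPow_antitone ht
      (Nat.sub_le_iff_le_add'.1 (mem_Ico.1 hj).1)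
      (pow_smul_mem_bigOPow (i + j) (mul_mem_bigOPow (ha i) (hb j)))
  have hsplit : X * Y = (X - S) * Y + S * (Y - T) + S * T := by noncomm_ring
  rw [HasExpansion, hsplit, sum_pow_smul_mul_sum_pow_smul, ← add_assoc, add_right_comm,
    add_sub_cancel_right]
  exact add_mem (add_mem hleft hright) htail

theorem right_inverse (ht : t =O[l] (1 : ι → 𝕜)) (ha : ∀ j, a j ∈ bigOPow l t 0)
    (hb : ∀ j, b j ∈ bigOPow l t 0)
    (hba : ∀ j, ∑ i ∈ range (j + 1), b i * a (j - i) = if j = 0 then 1 else 0)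
    (hY : Y ∈ bigOPow l t 0) (hXY : ∀ᶠ k in l, X k * Y k = 1) (hX : HasExpansion l t X a m) :
    HasExpansion l t Y b m := by
  rcases m.eq_zero_or_pos with rfl | hm
  · simpa only [HasExpansion, range_zero, sum_empty, sub_zero] using hY
  set T := ∑ j ∈ range m, t ^ j • b j with hT
  have hTX : T * X - 1 ∈ bigOPow l t m := by
    simpa [HasExpansion, hba, hm] using (hasExpansion_sum_pow_smul b m).mul ht hb ha hX
  -- Since `X Y = 1`, the next element is eventually `Y - T`.
  have hTXY : -((T * X - 1) * Y) ∈ bigOPow l t m := neg_mem (mul_mem_bigOPow hTX hY)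
  refine mem_bigOPow_congr hTXY (hXY.mono fun k hk => ?_)
  simp [sub_mul, mul_assoc, hk, hT]

end HasExpansion

theorem IsFormalSolution_s6.hasExpansion (h : IsFormalSolution_s6 ε α β A B)
    (ht : t =O[l] (1 : ι → 𝕜)) (h1 : (1 : ∀ k, W k) ∈ bigOPow l t 0)
    (hα : α ∈ bigOPow l t 0) (hβ : β ∈ bigOPow l t 0) (hε : ε =O[l] (1 : ι → 𝕜))
    (hq : q ∈ bigOPow l t 0) (hr : r ∈ bigOPow l t 0) (hqr : ∀ᶠ k in l, q k * r k = 1)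
    (heq : ∀ᶠ k in l, q k = 1 + (ε k * t k) •
      (α k * (q k * β k * r k) - q k * β k * r k * α k)) (m : ℕ) :
    HasExpansion l t q A m := by
  have hA j := (h.mem_bigOPow_zero h1 hα hβ hε j).1
  have hB j := (h.mem_bigOPow_zero h1 hα hβ hε j).2
  have hAβ j : A j * β ∈ bigOPow l t 0 := mul_mem_bigOPow (hA j) hβ
  induction m with
  | zero => simpa only [HasExpansion, range_zero, sum_empty, sub_zero] using hq
  | succ m ih =>
    have hrB : HasExpansion l t r B m := ih.right_inverse ht hA hB h.sum_mul_eq_ite hr hqr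
    have hqβr := (ih.mul_const hβ).mul ht hAβ hB hrB
    have hcomm : HasExpansion l t (ε • (α * (q * β * r) - q * β * r * α))
        (fun j => A (j + 1)) m := by
      simpa only [h.left_succ, sum_sub_distrib, mul_sum, sum_mul] using
        ((hqβr.const_mul hα).sub (hqβr.mul_const hα)).const_smul hε
    refine hcomm.coeff_zero_add_smul.congr (heq.mono fun k hk => ?_)
    simpa only [Pi.add_apply, Pi.sub_apply, Pi.mul_apply, Pi.smul_apply', Pi.one_apply,
      h.left_zero, smul_smul, mul_comm (t k)] using hk.symm

end Expansion

theorem stmt6_general {𝕜 ι : Type*} [NormedField 𝕜] {W : ι → Type*} [∀ k, NormedRing (W k)]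
    [∀ k, NormedAlgebra 𝕜 (W k)] {l : Filter ι} {t ε χ : ι → 𝕜} {α β P R : ∀ k, W k}
    {A B : ∀ k, ℕ → W k} (ht : IsBoundedUnder (· ≤ ·) l fun k => ‖t k‖)
    (hε : IsBoundedUnder (· ≤ ·) l fun k => ‖ε k‖)
    (h1 : IsBoundedUnder (· ≤ ·) l fun k => ‖(1 : W k)‖)
    (hα : IsBoundedUnder (· ≤ ·) l fun k => ‖α k‖)
    (hβ : IsBoundedUnder (· ≤ ·) l fun k => ‖β k‖)
    (hAB : ∀ k, IsFormalSolution_s6 (ε k) (α k) (β k) (A k) (B k))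
    (hχ : ∀ᶠ k in l, χ k ≠ 0)
    (hχP : IsBoundedUnder (· ≤ ·) l fun k => ‖χ k • P k‖)
    (hχR : IsBoundedUnder (· ≤ ·) l fun k => ‖(χ k)⁻¹ • R k‖)
    (hPR : ∀ᶠ k in l, P k * R k = 1)
    (hP : ∀ᶠ k in l, P k = (χ k)⁻¹ • (1 + (ε k * t k) •
      (α k * (P k * β k * R k) - P k * β k * R k * α k))) (m : ℕ) :
    ∃ D : ℝ, 0 < D ∧ ∀ᶠ k in l,
      ‖χ k • P k - ∑ j ∈ range m, t k ^ j • A k j‖ ≤ D * ‖t k‖ ^ m := by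
  have hQR : ∀ᶠ k in l, (χ • P) k * (χ⁻¹ • R) k = 1 := by
    filter_upwards [hχ, hPR] with k using smul_mul_inv_smul_eq_one
  have hQ : ∀ᶠ k in l, (χ • P) k = 1 + (ε k * t k) •
      (α k * ((χ • P) k * β k * (χ⁻¹ • R) k) - (χ • P) k * β k * (χ⁻¹ • R) k * α k) := by
    filter_upwards [hχ, hP] with k hχk hPk
    have hconj : (χ • P) k * β k * (χ⁻¹ • R) k = P k * β k * R k := by
      simp [hχk]
    rw [hconj, Pi.smul_apply', ← eq_inv_smul_iff₀ hχk]
    exact hPk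
  have hexp : HasExpansion l t (χ • P) (fun j k => A k j) m :=
    (IsFormalSolution_s6.pi hAB).hasExpansion ((isBigO_one_iff 𝕜).2 ht) (mem_bigOPow_zero.2 h1)
      (mem_bigOPow_zero.2 hα) (mem_bigOPow_zero.2 hβ) ((isBigO_one_iff 𝕜).2 hε)
      (mem_bigOPow_zero.2 hχP) (mem_bigOPow_zero.2 hχR) hQR hQ m
  obtain ⟨D, hD, hle⟩ := IsBigO.exists_pos hexp
  exact ⟨D, hD, hle.bound.mono fun k hk => by simpa using hk⟩

/-- In the Setup (see hypotheses), fix `N ≥ 1`.  There exists `C₀ > 0`,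
depending only on `N, M, E, c₁, c₂, n`, such that for every `C ≥ C₀`: whenever a family
`P k` lies in `B_k(C)`, is invertible and satisfies
`P k = (χ k)⁻¹ • (Id + ε k · k⁻¹ · [α k, P k ⬝ β k ⬝ (P k)⁻¹])` for all sufficiently
large `k` (with `β k = (α k)*`), there are `D > 0` and `k₀` with
`‖χ k • P k − Σ_{j=0}^{N} k^{−j} • A k j‖ ≤ D·k^{−N−1}` for all `k ≥ k₀`. -/
theorem stmt6 (V : ℕ → Type*) [∀ k, NormedAddCommGroup (V k)]
    [∀ k, InnerProductSpace ℂ (V k)] [∀ k, FiniteDimensional ℂ (V k)]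
    (α : ∀ k, V k →L[ℂ] V k) (M : ℝ) (hM : 0 < M) (hα : ∀ k, ‖α k‖ ≤ M)
    (n : ℕ) (hn : 1 ≤ n) (c₁ c₂ E : ℝ) (hc₁ : 0 < c₁) (hc₂ : 0 < c₂) (hE : 0 < E)
    (χ : ℕ → ℝ) (hχ : ∀ k : ℕ, 0 < k → c₁ * (k : ℝ) ^ n ≤ χ k ∧ χ k ≤ c₂ * (k : ℝ) ^ n)
    (ε : ℕ → ℝ) (hε : ∀ k, 0 < ε k ∧ ε k ≤ E)
    (A B : ∀ k : ℕ, ℕ → (V k →L[ℂ] V k))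
    (hA0 : ∀ k, A k 0 = 1) (hB0 : ∀ k, B k 0 = 1)
    (hArec : ∀ k j, A k (j + 1) = ε k • ∑ i ∈ Finset.range (j + 1),
      (α k * (A k i * ContinuousLinearMap.adjoint (α k) * B k (j - i)) -
        (A k i * ContinuousLinearMap.adjoint (α k) * B k (j - i)) * α k))
    (hBrec : ∀ k j, B k (j + 1) = -∑ i ∈ Finset.range (j + 1), B k i * A k (j + 1 - i))
    (N : ℕ) (hN : 1 ≤ N) :
    ∃ C₀ : ℝ, 0 < C₀ ∧ ∀ C : ℝ, C ≥ C₀ → ∀ P : (∀ k : ℕ, V k →L[ℂ] V k),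
      (∃ k₁ : ℕ, ∀ k ≥ k₁, 0 < k ∧ ‖χ k • P k - 1‖ ≤ C * (k : ℝ)⁻¹ ∧ IsUnit (P k) ∧
        P k = (χ k)⁻¹ • (1 + (ε k * (k : ℝ)⁻¹) •
          (α k * (P k * ContinuousLinearMap.adjoint (α k) * Ring.inverse (P k)) -
            (P k * ContinuousLinearMap.adjoint (α k) * Ring.inverse (P k)) * α k))) →
      ∃ D : ℝ, 0 < D ∧ ∃ k₀ : ℕ, ∀ k ≥ k₀,
        ‖χ k • P k - ∑ j ∈ Finset.range (N + 1), ((k : ℝ) ^ j)⁻¹ • A k j‖ ≤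
          D * ((k : ℝ) ^ (N + 1))⁻¹ := by
  refine ⟨1, one_pos, fun C _ P ⟨k₁, hk₁⟩ => ?_⟩
  have hP := eventually_atTop.2 ⟨k₁, hk₁⟩
  have hχ0 : ∀ᶠ k in atTop, χ k ≠ 0 := by
    filter_upwards [eventually_gt_atTop 0] with k hk
    exact (lt_of_lt_of_le (by positivity) (hχ k hk).1).ne'
  have hPR : ∀ᶠ k in atTop, P k * Ring.inverse (P k) = 1 :=
    hP.mono fun k hk => Ring.mul_inverse_cancel _ hk.2.2.1
  have hQR : ∀ᶠ k in atTop, χ k • P k * (χ k)⁻¹ • Ring.inverse (P k) = 1 := by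
    filter_upwards [hχ0, hPR] with k using smul_mul_inv_smul_eq_one
  have h1 : IsBoundedUnder (· ≤ ·) atTop fun k => ‖(1 : V k →L[ℂ] V k)‖ :=
    isBoundedUnder_of ⟨1, fun _ => ContinuousLinearMap.norm_id_le⟩
  have hlim : Tendsto (fun k => ‖χ k • P k - 1‖) atTop (𝓝 0) :=
    squeeze_zero' (.of_forall fun _ => norm_nonneg _) (hP.mono fun _ hk => hk.2.1)
      (by simpa using tendsto_inv_atTop_nhds_zero_nat.const_mul C)
  simpa using stmt6_general tendsto_inv_atTop_nhds_zero_nat.norm.isBoundedUnder_le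
    (isBoundedUnder_of ⟨E, fun k => by simpa [abs_of_pos (hε k).1] using (hε k).2⟩) h1
    (isBoundedUnder_of ⟨M, hα⟩) (isBoundedUnder_of ⟨M, fun k => by simpa using hα k⟩)
    (fun k => ⟨hA0 k, hB0 k, hArec k, hBrec k⟩) hχ0
    (isBoundedUnder_norm_of_tendsto_norm_sub_one h1 hlim)
    (isBoundedUnder_norm_right_inverse h1 hlim hQR) hPR (hP.mono fun _ hk => hk.2.2.2) (N + 1)
end
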